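/- Let p_1, p_2, p_3 be three distinct non-collinear points of P^2 and let Z' = 2p_1 + 2p_2 + p_3 be the fat points scheme with double points at p_1 and p_2 and a simple point at p_3. Then the Waldschmidt constant satisfies α̂(I(Z')) ≥ 5/2. -/

import Mathlib

noncomputable section

open MvPolynomial

/-- `alpha J` is the least degree of a nonzero homogeneous form in the ideal `J`. -/
def alpha {kk : Type*} [Field kk] {σ : Type*} (J : Ideal (MvPolynomial σ kk)) : ℕ :=
  sInf {d : ℕ | ∃ f ∈ J, f ≠ 0 ∧ MvPolynomial.IsHomogeneous f d}

/-- The homogeneous (prime) ideal of the point of `ℙ²` represented by the nonzero vector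
`p`, generated by the linear forms vanishing at `p`. -/
def pointIdeal {kk : Type*} [Field kk] (p : Fin 3 → kk) : Ideal (MvPolynomial (Fin 3) kk) :=
  Ideal.span {f | f.IsHomogeneous 1 ∧ MvPolynomial.eval p f = 0}

/-- Two nonzero vectors represent the same point of `ℙ²`. -/
def projEq {kk : Type*} [Field kk] (p q : Fin 3 → kk) : Prop :=
  ∃ c : kk, c ≠ 0 ∧ q = c • p

theorem deg_one {d : Fin 3 →₀ ℕ} (h : d.degree = 1) : ∃ j, d = Finsupp.single j 1 := by
  rw [Finsupp.degree_eq_sum, Fin.sum_univ_three] at h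
  have : d 0 = 1 ∧ d 1 = 0 ∧ d 2 = 0 ∨ d 0 = 0 ∧ d 1 = 1 ∧ d 2 = 0 ∨
    d 0 = 0 ∧ d 1 = 0 ∧ d 2 = 1 := by omega
  rcases this with h | h | h
  · refine ⟨0, ?_⟩; ext l; fin_cases l <;> simp [h]
  · refine ⟨1, ?_⟩; ext l; fin_cases l <;> simp [h]
  · refine ⟨2, ?_⟩; ext l; fin_cases l <;> simp [h]

/-- Change of coordinates sending the coordinate points to the `P j`. -/
def chg {kk : Type*} [Field kk] (P : Fin 3 → Fin 3 → kk) :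
    MvPolynomial (Fin 3) kk →ₐ[kk] MvPolynomial (Fin 3) kk :=
  aeval (fun i => ∑ j, C (P j i) * X j)

theorem chg_hom {kk : Type*} [Field kk] (P : Fin 3 → Fin 3 → kk)
    {f : MvPolynomial (Fin 3) kk} {n : ℕ} (hf : f.IsHomogeneous n) :
    (chg P f).IsHomogeneous n := by
  have := hf.aeval (n := 1) (fun i => ∑ j, C (P j i) * (X j : MvPolynomial (Fin 3) kk)) (fun i => by
    apply IsHomogeneous.sum
    intro j _
    simpa using (isHomogeneous_C (Fin 3) (P j i)).mul (isHomogeneous_X kk j))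
  simpa [chg] using this

theorem eval_chg {kk : Type*} [Field kk] (P : Fin 3 → Fin 3 → kk)
    (f : MvPolynomial (Fin 3) kk) (v : Fin 3 → kk) :
    eval v (chg P f) = eval (fun i => ∑ j, P j i * v j) f := by
  induction f using MvPolynomial.induction_on with
  | C a => simp [chg]
  | add p q hp hq => simp [hp, hq]
  | mul_X p i hp => rw [map_mul, map_mul, map_mul, hp]; simp [chg]

theorem coeff_lin {kk : Type*} [Field kk] {h : MvPolynomial (Fin 3) kk}
    (hh : h.IsHomogeneous 1) (i : Fin 3) :
    coeff (Finsupp.single i 1) h = eval (Pi.single i 1) h := by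
  rw [eval_eq', Finset.sum_eq_single (Finsupp.single i 1)]
  · rw [Finset.prod_eq_one]
    · simp
    · intro j _
      by_cases hj : j = i
      · subst hj; simp
      · simp [Finsupp.single_apply, Ne.symm hj]
  · intro d hd hne
    have hdeg : d.degree = 1 := hh.degree_eq_sum_deg_support hd |>.symm
    obtain ⟨j, hj⟩ : ∃ j, d = Finsupp.single j 1 := deg_one hdeg
    have hji : j ≠ i := by rintro rfl; exact hne hj
    rw [Finset.prod_eq_zero (Finset.mem_univ j), mul_zero]
    simp [hj, hji]
  · intro hns
    rw [notMem_support_iff.1 hns, zero_mul]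

theorem single_bound (i j : Fin 3) (h : j ≠ i) :
    1 + (Finsupp.single j 1 : Fin 3 →₀ ℕ) i ≤ (Finsupp.single j 1 : Fin 3 →₀ ℕ) 0 +
      (Finsupp.single j 1 : Fin 3 →₀ ℕ) 1 + (Finsupp.single j 1 : Fin 3 →₀ ℕ) 2 := by
  simp only [Finsupp.single_apply]
  revert i j
  decide

theorem chg_pow {kk : Type*} [Field kk] (P : Fin 3 → Fin 3 → kk) (i : Fin 3) (n : ℕ) :
    ∀ f ∈ pointIdeal (P i) ^ n, ∀ d ∈ (chg P f).support, n + d i ≤ d 0 + d 1 + d 2 := by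
  have key : ∀ a b : ℕ, ∀ f g : MvPolynomial (Fin 3) kk,
      (∀ d ∈ f.support, a + d i ≤ d 0 + d 1 + d 2) →
      (∀ d ∈ g.support, b + d i ≤ d 0 + d 1 + d 2) →
      (∀ d ∈ (f * g).support, (a + b) + d i ≤ d 0 + d 1 + d 2) := by
    intro a b f g hf hg d hd
    obtain ⟨u, hu, v, hv, rfl⟩ := Finset.mem_add.1 (support_mul f g hd)
    have := hf u hu
    have := hg v hv
    simp only [Finsupp.add_apply]
    omega
  have kadd : ∀ a : ℕ, ∀ f g : MvPolynomial (Fin 3) kk,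
      (∀ d ∈ f.support, a + d i ≤ d 0 + d 1 + d 2) →
      (∀ d ∈ g.support, a + d i ≤ d 0 + d 1 + d 2) →
      (∀ d ∈ (f + g).support, a + d i ≤ d 0 + d 1 + d 2) := by
    intro a f g hf hg d hd
    rcases Finset.mem_union.1 (support_add hd) with h | h
    · exact hf d h
    · exact hg d h
  have triv : ∀ f : MvPolynomial (Fin 3) kk,
      ∀ d ∈ f.support, 0 + d i ≤ d 0 + d 1 + d 2 := by
    intro f d _
    fin_cases i <;> simp <;> omega
  induction n with
  | zero => intro f _; exact triv _
  | succ n ih =>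
    intro f hf
    rw [pow_succ] at hf
    refine Submodule.mul_induction_on hf ?_ ?_
    · intro a ha b hb
      rw [map_mul]
      refine key n 1 _ _ (ih a ha) ?_
      refine Submodule.span_induction (p := fun b _ => ∀ d ∈ (chg P b).support,
        1 + d i ≤ d 0 + d 1 + d 2) ?_ ?_ ?_ ?_ hb
      · rintro g ⟨hg, hg0⟩ d hd
        have hh := chg_hom P hg
        have hdeg : d.degree = 1 := hh.degree_eq_sum_deg_support hd |>.symm
        obtain ⟨j, hj⟩ : ∃ j, d = Finsupp.single j 1 := deg_one hdeg
        have hji : j ≠ i := by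
          rintro rfl
          rw [mem_support_iff, hj, coeff_lin hh, eval_chg] at hd
          apply hd
          rw [← hg0]
          congr 2
          ext l
          simp [Pi.single_apply]
        subst hj
        exact single_bound i j hji
      · simp
      · intro x y _ _ hx hy
        rw [map_add]
        exact kadd 1 _ _ hx hy
      · intro a x _ hx
        rw [smul_eq_mul, map_mul]
        have := key 0 1 _ _ (triv (chg P a)) hx
        simpa using this
    · intro x y hx hy
      rw [map_add]
      exact kadd _ _ _ hx hy

theorem exists_lin {kk : Type*} [Field kk] (p : Fin 3 → kk) :
    ∃ g : MvPolynomial (Fin 3) kk, g ≠ 0 ∧ g.IsHomogeneous 1 ∧ g ∈ pointIdeal p := by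
  have main : ∃ g : MvPolynomial (Fin 3) kk, g ≠ 0 ∧ g.IsHomogeneous 1 ∧ eval p g = 0 := by
    by_cases h : p 0 = 0
    · exact ⟨X 0, X_ne_zero 0, isHomogeneous_X _ _, by simpa using h⟩
    · refine ⟨C (p 0) * X 1 - C (p 1) * X 0, ?_, ?_, ?_⟩
      · intro h0
        have := congrArg (eval (Pi.single (1 : Fin 3) (1 : kk))) h0
        simp at this
        exact h this
      · apply IsHomogeneous.sub
        · simpa using (isHomogeneous_C (Fin 3) (p 0)).mul (isHomogeneous_X kk 1)
        · simpa using (isHomogeneous_C (Fin 3) (p 1)).mul (isHomogeneous_X kk 0)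
      · simp; ring
  obtain ⟨g, h1, h2, h3⟩ := main
  exact ⟨g, h1, h2, Ideal.subset_span ⟨h2, h3⟩⟩

/-- Let `p₁, p₂, p₃` be three distinct non-collinear points of `ℙ²` and
let `Z' = 2p₁ + 2p₂ + p₃`.  Then `α̂(I(Z')) ≥ 5/2`. -/
theorem waldschmidt_two_double_points_ge
    {kk : Type*} [Field kk] [IsAlgClosed kk]
    (p₁ p₂ p₃ : Fin 3 → kk)
    (hp10 : p₁ ≠ 0) (hp20 : p₂ ≠ 0) (hp30 : p₃ ≠ 0)
    (hp12 : ¬ projEq p₁ p₂) (hp13 : ¬ projEq p₁ p₃) (hp23 : ¬ projEq p₂ p₃)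
    (hncol : ¬ ∃ g : MvPolynomial (Fin 3) kk, g ≠ 0 ∧ g.IsHomogeneous 1 ∧
      MvPolynomial.eval p₁ g = 0 ∧ MvPolynomial.eval p₂ g = 0 ∧
      MvPolynomial.eval p₃ g = 0) :
    (⨅ k : ℕ+, (alpha (pointIdeal p₁ ^ (2 * (k : ℕ)) ⊓ pointIdeal p₂ ^ (2 * (k : ℕ)) ⊓
        pointIdeal p₃ ^ (k : ℕ)) : ℝ) / ((k : ℕ) : ℝ)) ≥ 5 / 2 := by
  have hdet : (Matrix.of ![p₁, p₂, p₃]).det ≠ 0 := by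
    intro h0
    obtain ⟨v, hv, hv0⟩ := Matrix.exists_mulVec_eq_zero_iff.2 h0
    refine hncol ⟨∑ j, C (v j) * X j, ?_, ?_, ?_, ?_, ?_⟩
    · intro h
      apply hv
      ext l
      have := congrArg (eval (Pi.single l (1 : kk))) h
      simpa [Pi.single_apply] using this
    · apply IsHomogeneous.sum
      intro j _
      simpa using (isHomogeneous_C (Fin 3) (v j)).mul (isHomogeneous_X kk j)
    · have := congrFun hv0 0
      simpa [Matrix.mulVec, dotProduct, mul_comm] using this
    · have := congrFun hv0 1
      simpa [Matrix.mulVec, dotProduct, mul_comm] using this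
    · have := congrFun hv0 2
      simpa [Matrix.mulVec, dotProduct, mul_comm] using this
  have hinj : ∀ f, chg ![p₁, p₂, p₃] f = 0 → f = 0 := by
    intro f hf
    have : Infinite kk := IsAlgClosed.instInfinite
    apply MvPolynomial.funext
    intro w
    have hu : IsUnit (Matrix.of ![p₁, p₂, p₃]) :=
      (Matrix.isUnit_iff_isUnit_det _).2 (isUnit_iff_ne_zero.2 hdet)
    obtain ⟨v, hv⟩ := (Matrix.vecMul_surjective_iff_isUnit.2 hu) w
    have h1 := eval_chg ![p₁, p₂, p₃] f v
    rw [hf, map_zero] at h1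
    rw [map_zero, h1, ← hv]
    congr 2
    ext i
    simp [Matrix.vecMul, dotProduct, mul_comm]
  apply le_ciInf
  intro k
  have hk : (0 : ℝ) < ((k : ℕ) : ℝ) := by exact_mod_cast k.pos
  rw [le_div_iff₀ hk]
  have hne : {d : ℕ | ∃ f ∈ (pointIdeal p₁ ^ (2 * (k : ℕ)) ⊓ pointIdeal p₂ ^ (2 * (k : ℕ)) ⊓
        pointIdeal p₃ ^ (k : ℕ)), f ≠ 0 ∧ MvPolynomial.IsHomogeneous f d}.Nonempty := by
    obtain ⟨a, a0, ah, am⟩ := exists_lin p₁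
    obtain ⟨b, b0, bh, bm⟩ := exists_lin p₂
    obtain ⟨c, c0, ch, cm⟩ := exists_lin p₃
    refine ⟨_, a ^ (2 * (k : ℕ)) * b ^ (2 * (k : ℕ)) * c ^ (k : ℕ), ⟨⟨?_, ?_⟩, ?_⟩, ?_,
      ((ah.pow _).mul (bh.pow _)).mul (ch.pow _)⟩
    · exact Ideal.mul_mem_right _ _ (Ideal.mul_mem_right _ _ (Ideal.pow_mem_pow am _))
    · exact Ideal.mul_mem_right _ _ (Ideal.mul_mem_left _ _ (Ideal.pow_mem_pow bm _))
    · exact Ideal.mul_mem_left _ _ (Ideal.pow_mem_pow cm _)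
    · exact mul_ne_zero (mul_ne_zero (pow_ne_zero _ a0) (pow_ne_zero _ b0)) (pow_ne_zero _ c0)
  obtain ⟨f, ⟨⟨hf1, hf2⟩, hf3⟩, hf0, hfh⟩ := Nat.sInf_mem hne
  change f.IsHomogeneous (alpha _) at hfh
  have hc0 : chg ![p₁, p₂, p₃] f ≠ 0 := fun h => hf0 (hinj f h)
  obtain ⟨d, hd⟩ := support_nonempty.2 hc0
  have hdeg := (chg_hom ![p₁, p₂, p₃] hfh).degree_eq_sum_deg_support hd
  rw [← Finsupp.degree_apply, Finsupp.degree_eq_sum, Fin.sum_univ_three] at hdeg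
  have e1 := chg_pow ![p₁, p₂, p₃] 0 _ f hf1 d hd
  have e2 := chg_pow ![p₁, p₂, p₃] 1 _ f hf2 d hd
  have e3 := chg_pow ![p₁, p₂, p₃] 2 _ f hf3 d hd
  rw [hdeg]
  have : 5 * (k : ℕ) ≤ 2 * (d 0 + d 1 + d 2) := by omega
  have h' : (5 : ℝ) * ((k : ℕ) : ℝ) ≤ 2 * ((d 0 + d 1 + d 2 : ℕ) : ℝ) := by exact_mod_cast this
  linarith
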